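/- arXiv:0807.1491 — 6 statements merged into one kernel-verified Lean document; each statement's English description precedes it below -/
import Mathlib

section
/- Let R be an integral domain, Λ = R[A, A⁻¹] the Laurent polynomial ring, M a Λ-module, N = M/(A+1)·M regarded as an R-module via evaluation A ↦ −1, and π : M → N the quotient map. Suppose L₁, …, Lₙ ∈ M generate M as a Λ-module and the images π(L₁), …, π(Lₙ) are R-linearly independent in N. If M has a torsion element (i.e., there exist m ∈ M with m ≠ 0 and f ∈ Λ with f ≠ 0 such that f·m = 0), then M has (A+1)-torsion (i.e., there exists m ∈ M with m ≠ 0 and (A+1)·m = 0). -/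
open LaurentPolynomial

/-!
If `∑ cᵢ • Lᵢ = 0` and the `Lᵢ` are independent modulo `A + 1`, then every `cᵢ` is divisible by
`A + 1`. When `A + 1` acts injectively on the module, dividing the relation by it gives another
relation, so the `cᵢ` are divisible by all powers of `A + 1`. This forces `cᵢ = 0`: as `A + 1` is
coprime to `A`, denominators can be cleared, and a nonzero polynomial has a finite order of
vanishing at `-1`. Hence the `Lᵢ` form a basis, and a free module has no torsion.
-/

section IndependenceModulo

variable {R S M ι : Type*} [CommRing R] [CommRing S] [Algebra R S] [AddCommGroup M] [Module S M]
  [Module R M] [IsScalarTower R S M] {a : S} {P : Submodule S M} {v : ι → M} {s : Finset ι}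
  {c : ι → S}

theorem dvd_of_sum_smul_mem_of_linearIndependent_mk
    (hconst : ∀ x : S, ∃ r : R, a ∣ x - algebraMap R S r) (hP : ∀ m : M, a • m ∈ P)
    (hv : LinearIndependent R fun i ↦ Submodule.Quotient.mk (p := P) (v i))
    (hc : ∑ i ∈ s, c i • v i ∈ P) {i : ι} (hi : i ∈ s) : a ∣ c i := by
  choose r hr using hconst
  have sub_mem : ∑ i ∈ s, c i • v i - ∑ i ∈ s, r (c i) • v i ∈ P := by
    rw [← Finset.sum_sub_distrib]
    refine P.sum_mem fun i _ ↦ ?_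
    obtain ⟨d, hd⟩ := hr (c i)
    rw [← algebraMap_smul S (r (c i)), ← sub_smul, hd, mul_smul]
    exact hP _
  have const_mem : ∑ i ∈ s, r (c i) • v i ∈ P := (P.sub_mem_iff_right hc).mp sub_mem
  have const_eq_zero : ∑ i ∈ s, r (c i) • Submodule.Quotient.mk (p := P) (v i) = 0 := by
    simp only [← Submodule.Quotient.mk_smul]
    exact (map_sum P.mkQ _ _).symm.trans ((Submodule.Quotient.mk_eq_zero P).mpr const_mem)
  have hri : r (c i) = 0 := linearIndependent_iff'.mp hv s _ const_eq_zero i hi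
  simpa only [hri, map_zero, sub_zero] using hr (c i)

theorem pow_dvd_of_sum_smul_eq_zero
    (ha : IsSMulRegular M a) (hdvd : ∀ c : ι → S, ∑ i ∈ s, c i • v i = 0 → ∀ i ∈ s, a ∣ c i)
    (hc : ∑ i ∈ s, c i • v i = 0) (k : ℕ) : ∀ i ∈ s, a ^ k ∣ c i := by
  induction k generalizing c with
  | zero => simp
  | succ k ih =>
    choose! d hd using hdvd c hc
    have smul_relation : a • ∑ i ∈ s, d i • v i = 0 := by
      rw [← hc, Finset.smul_sum]
      exact Finset.sum_congr rfl fun i hi ↦ by rw [hd i hi, mul_smul]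
    have relation : ∑ i ∈ s, d i • v i = 0 := ha.right_eq_zero_of_smul smul_relation
    intro i hi
    rw [hd i hi, pow_succ']
    exact mul_dvd_mul_left a (ih relation i hi)

theorem linearIndependent_of_linearIndependent_mk
    (hconst : ∀ x : S, ∃ r : R, a ∣ x - algebraMap R S r)
    (hfin : ∀ x : S, x ≠ 0 → FiniteMultiplicity a x)
    (ha : IsSMulRegular M a) (hP : ∀ m : M, a • m ∈ P)
    (hv : LinearIndependent R fun i ↦ Submodule.Quotient.mk (p := P) (v i)) :
    LinearIndependent S v := by
  refine linearIndependent_iff'.mpr fun s c hc i hi ↦ by_contra fun hci ↦ ?_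
  refine FiniteMultiplicity.not_iff_forall.mpr (fun k ↦ ?_) (hfin (c i) hci)
  refine pow_dvd_of_sum_smul_eq_zero ha (fun c' hc' j hj ↦ ?_) hc k i hi
  exact dvd_of_sum_smul_mem_of_linearIndependent_mk hconst hP hv (hc' ▸ P.zero_mem) hj

end IndependenceModulo

theorem isSMulRegular_of_basis {S M ι : Type*} [CommRing S] [AddCommGroup M] [Module S M]
    (b : Module.Basis ι S M) {f : S} (hf : f ∈ nonZeroDivisors S) : IsSMulRegular M f :=
  have := Module.Free.of_basis b
  Module.Flat.isSMulRegular_of_nonZeroDivisors hf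

section Laurent

theorem toLaurent_X_sub_C {R : Type*} [Ring R] (r : R) :
    Polynomial.toLaurent (Polynomial.X - Polynomial.C r) = T 1 - C r := by
  rw [map_sub, Polynomial.toLaurent_X, Polynomial.toLaurent_C]

theorem dvd_of_toLaurent_dvd_toLaurent {R : Type*} [CommSemiring R] {p q : Polynomial R}
    (hq : IsCoprime q Polynomial.X)
    (h : Polynomial.toLaurent q ∣ Polynomial.toLaurent p) : q ∣ p := by
  obtain ⟨g, hg⟩ := h
  obtain ⟨n, g', hg'⟩ := g.exists_T_pow
  have mul_eq : p * Polynomial.X ^ n = q * g' := by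
    apply Polynomial.toLaurent_injective
    rw [map_mul, map_mul, Polynomial.toLaurent_X_pow, hg, hg', mul_assoc]
  exact hq.pow_right.dvd_of_dvd_mul_right ⟨g', mul_eq⟩

variable {R : Type*} [CommRing R]

theorem T_one_sub_C_dvd_sub_C_eval₂ (u : Rˣ) (f : LaurentPolynomial R) :
    T 1 - C (u : R) ∣ f - C (eval₂ (RingHom.id R) u f) := by
  obtain ⟨n, p, hp⟩ := f.exists_T_pow
  set e : R := eval₂ (RingHom.id R) u f
  have eval_p : p.eval (u : R) = e * (u : R) ^ n := by
    rw [Polynomial.eval, ← eval₂_toLaurent, hp, map_mul, eval₂_T_n]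
  have root : (p - Polynomial.C e * Polynomial.X ^ n).IsRoot (u : R) := by
    simp [eval_p]
  have clear_denominator :
      (f - C e) * T n = Polynomial.toLaurent (p - Polynomial.C e * Polynomial.X ^ n) := by
    rw [map_sub, Polynomial.toLaurent_C_mul_X_pow, hp, sub_mul]
  rw [← (isUnit_T n).dvd_mul_right, clear_denominator, ← toLaurent_X_sub_C]
  exact map_dvd Polynomial.toLaurent (Polynomial.dvd_iff_isRoot.mpr root)

theorem finiteMultiplicity_T_one_sub_C (u : Rˣ) {f : LaurentPolynomial R} (hf : f ≠ 0) :
    FiniteMultiplicity (T 1 - C (u : R)) f := by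
  obtain ⟨n, p, hp⟩ := f.exists_T_pow
  have hp0 : p ≠ 0 := by
    rw [← Polynomial.toLaurent_ne_zero, hp]
    exact (isUnit_T n).mul_left_eq_zero.not.mpr hf
  have coprime_X : IsCoprime (Polynomial.X - Polynomial.C (u : R)) Polynomial.X := by
    simpa using Polynomial.isCoprime_X_sub_C_of_isUnit_sub (b := (0 : R)) (by simp)
  obtain ⟨k, hk⟩ := Polynomial.finiteMultiplicity_X_sub_C (u : R) hp0
  refine FiniteMultiplicity.mul_left (c := T n) ⟨k, fun hdvd ↦ hk ?_⟩
  rw [← hp, ← toLaurent_X_sub_C, ← map_pow] at hdvd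
  exact dvd_of_toLaurent_dvd_toLaurent coprime_X.pow_left hdvd

end Laurent

theorem laurent_A_plus_one_torsion_of_torsion_general
    {R M ι : Type*} [CommRing R] [AddCommGroup M] [Module (LaurentPolynomial R) M] [Module R M]
    [IsScalarTower R (LaurentPolynomial R) M] (u : Rˣ) {L : ι → M}
    {P : Submodule (LaurentPolynomial R) M}
    (hP : ∀ m : M, (T 1 - C (u : R)) • m ∈ P)
    (hgen : Submodule.span (LaurentPolynomial R) (Set.range L) = ⊤)
    (hind : LinearIndependent R fun i ↦ Submodule.Quotient.mk (p := P) (L i))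
    (htors : ∃ (m : M) (f : LaurentPolynomial R),
      m ≠ 0 ∧ f ∈ nonZeroDivisors (LaurentPolynomial R) ∧ f • m = 0) :
    ∃ m : M, m ≠ 0 ∧ (T 1 - C (u : R)) • m = 0 := by
  by_contra! no_torsion
  obtain ⟨m, f, hm, hf, hfm⟩ := htors
  have regular : IsSMulRegular M (T 1 - C (u : R)) :=
    isSMulRegular_iff_right_eq_zero_of_smul.mpr fun m ↦ not_imp_not.mp (no_torsion m)
  have indep : LinearIndependent (LaurentPolynomial R) L :=
    linearIndependent_of_linearIndependent_mk
      (fun f ↦ ⟨_, T_one_sub_C_dvd_sub_C_eval₂ u f⟩)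
      (fun _ ↦ finiteMultiplicity_T_one_sub_C u) regular hP hind
  have basis := Module.Basis.mk indep hgen.ge
  exact hm ((isSMulRegular_of_basis basis hf).right_eq_zero_of_smul hfm)

/-- Let `R` be an integral domain, `Λ = R[A,A⁻¹]`, `M` a `Λ`-module,
`P = (A+1)·M`, and `N = M ⧸ P` regarded as an `R`-module (via evaluation `A ↦ -1`).
If `L₁, …, Lₙ` generate `M` over `Λ`, their images in `N` are `R`-linearly
independent, and `M` has a torsion element, then `M` has `(A+1)`-torsion. -/
theorem laurent_A_plus_one_torsion_of_torsion
    (R : Type*) [CommRing R] [IsDomain R] (M : Type*) [AddCommGroup M]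
    [Module (LaurentPolynomial R) M] [Module R M]
    [IsScalarTower R (LaurentPolynomial R) M]
    (n : ℕ) (L : Fin n → M)
    (P : Submodule (LaurentPolynomial R) M)
    (hP : P = Ideal.span {(T 1 + 1 : LaurentPolynomial R)} •
      (⊤ : Submodule (LaurentPolynomial R) M))
    (hgen : Submodule.span (LaurentPolynomial R) (Set.range L) = ⊤)
    (hind : LinearIndependent R (fun i => Submodule.Quotient.mk (p := P) (L i)))
    (htors : ∃ (m : M) (f : LaurentPolynomial R), m ≠ 0 ∧ f ≠ 0 ∧ f • m = 0) :
    ∃ m : M, m ≠ 0 ∧ (T 1 + 1 : LaurentPolynomial R) • m = 0 := by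
  have hT : (T 1 + 1 : LaurentPolynomial R) = T 1 - C ((-1 : Rˣ) : R) := by simp
  obtain ⟨m, f, hm, hf, hfm⟩ := htors
  rw [hT] at hP ⊢
  refine laurent_A_plus_one_torsion_of_torsion_general (-1) (fun m ↦ ?_) hgen hind
    ⟨m, f, hm, mem_nonZeroDivisors_of_ne_zero hf, hfm⟩
  rw [hP]
  exact Submodule.smul_mem_smul (Ideal.mem_span_singleton_self _) Submodule.mem_top
end

section
/- The matrices A₁ and B₁ lie in SL(2,ℂ), i.e., det A₁ = 1 and det B₁ = 1, and they satisfy A₁⁵ = B₁³ = (A₁B₁)² = −I, where I is the 2×2 identity matrix. Consequently, sending r ↦ A₁ and s ↦ B₁ defines a homomorphism σ₁ from the binary icosahedral group G = ⟨r, s ∣ r⁵ = s³ = (rs)²⟩ into SL(2,ℂ). -/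
noncomputable section

/-- `e₅ = exp(2πi/5)`. -/
def e5 : ℂ := Complex.exp (2 * Real.pi * Complex.I / 5)

/-- The matrix `A₁`, image of the generator `r` under the representation `σ₁`. -/
def A1 : Matrix (Fin 2) (Fin 2) ℂ :=
  (1/5 : ℂ) • !![-3*e5 - e5^2 + e5^3 - 2*e5^4, e5 - 3*e5^2 - 2*e5^3 - e5^4;
                 e5 + 2*e5^2 + 3*e5^3 - e5^4, -2*e5 + e5^2 - e5^3 - 3*e5^4]

/-- The matrix `B₁`, image of the generator `s` under the representation `σ₁`. -/
def B1 : Matrix (Fin 2) (Fin 2) ℂ :=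
  (1/5 : ℂ) • !![-e5 - 2*e5^2 - 3*e5^3 - 4*e5^4, 2*e5 - e5^2 + e5^3 - 2*e5^4;
                 2*e5 - e5^2 + e5^3 - 2*e5^4, -4*e5 - 3*e5^2 - 2*e5^3 - e5^4]

/-- Relators `r⁵((rs)²)⁻¹` and `s³((rs)²)⁻¹` of the binary icosahedral group
`⟨r, s ∣ r⁵ = s³ = (rs)²⟩`, with `r = of 0` and `s = of 1`. -/
def icosRels : Set (FreeGroup (Fin 2)) :=
  {FreeGroup.of 0 ^ 5 * ((FreeGroup.of 0 * FreeGroup.of 1) ^ 2)⁻¹,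
   FreeGroup.of 1 ^ 3 * ((FreeGroup.of 0 * FreeGroup.of 1) ^ 2)⁻¹}

/-! An element of `SL(2)` has characteristic polynomial `X² - tX + 1`, so by Cayley–Hamilton
its powers are governed by its trace `t` alone. The traces of `A₁`, `B₁` and `A₁B₁` are a root
of `t² = t + 1`, `1` and `0`, and in these cases the characteristic polynomial divides `X⁵ + 1`,
`X³ + 1` and `X² + 1` respectively. -/

section CayleyHamilton

open Polynomial

variable {R : Type*} [CommRing R]

theorem pow_eq_neg_one_of_charpoly_dvd {n : Type*} [Fintype n] [DecidableEq n]
    {M : Matrix n n R} {k : ℕ} (h : M.charpoly ∣ X ^ k + 1) : M ^ k = -1 := by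
  have hM := aeval_eq_zero_of_dvd_aeval_eq_zero h M.aeval_self_charpoly
  rw [map_add, map_pow, aeval_X, map_one] at hM
  exact eq_neg_of_add_eq_zero_left hM

variable {M : Matrix (Fin 2) (Fin 2) R}

theorem charpoly_of_det_eq_one [Nontrivial R] (hdet : M.det = 1) :
    M.charpoly = X ^ 2 - C M.trace * X + 1 := by
  rw [M.charpoly_fin_two, hdet, C_1]

theorem sq_eq_neg_one_of_trace_eq_zero (hdet : M.det = 1) (htr : M.trace = 0) :
    M ^ 2 = -1 := by
  nontriviality R
  apply pow_eq_neg_one_of_charpoly_dvd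
  rw [charpoly_of_det_eq_one hdet, htr, C_0, zero_mul, sub_zero]

theorem pow_three_eq_neg_one_of_trace_eq_one (hdet : M.det = 1) (htr : M.trace = 1) :
    M ^ 3 = -1 := by
  nontriviality R
  apply pow_eq_neg_one_of_charpoly_dvd
  rw [charpoly_of_det_eq_one hdet, htr, C_1]
  exact ⟨X + 1, by ring⟩

theorem pow_five_eq_neg_one_of_trace_sq_eq (hdet : M.det = 1)
    (htr : M.trace ^ 2 = M.trace + 1) : M ^ 5 = -1 := by
  nontriviality R
  apply pow_eq_neg_one_of_charpoly_dvd
  rw [charpoly_of_det_eq_one hdet]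
  have hC : C M.trace ^ 2 = C M.trace + 1 := by rw [← C_pow, htr, C_add, C_1]
  -- the last factor belongs to the conjugate root `1 - t` of `t² = t + 1`
  refine ⟨(X + 1) * (X ^ 2 - (1 - C M.trace) * X + 1), ?_⟩
  linear_combination X ^ 2 * (X + 1) * hC

end CayleyHamilton

theorem lift_eq_one_of_mem_icosRels {H : Type*} [Group H] {f : Fin 2 → H}
    (hr : f 0 ^ 5 = (f 0 * f 1) ^ 2) (hs : f 1 ^ 3 = (f 0 * f 1) ^ 2) :
    ∀ w ∈ icosRels, FreeGroup.lift f w = 1 := by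
  rintro w (rfl | rfl)
  · simpa [mul_inv_eq_one] using hr
  · simpa [mul_inv_eq_one] using hs

theorem e5_geom_sum : 1 + e5 + e5 ^ 2 + e5 ^ 3 + e5 ^ 4 = 0 := by
  have he5 : IsPrimitiveRoot e5 5 := by
    simpa [e5] using Complex.isPrimitiveRoot_exp 5 (by norm_num)
  simpa [Finset.sum_range_succ] using he5.geom_sum_eq_zero (by norm_num)

theorem det_A1 : A1.det = 1 := by
  rw [A1, Matrix.det_smul, Matrix.det_fin_two_of, Fintype.card_fin]
  linear_combination (e5 ^ 4 - e5 ^ 3 + e5 ^ 2 + 5 * e5 - 5) / 5 * e5_geom_sum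

theorem det_B1 : B1.det = 1 := by
  rw [B1, Matrix.det_smul, Matrix.det_fin_two_of, Fintype.card_fin]
  linear_combination (3 * e5 ^ 3 + 5 * e5 - 5) / 5 * e5_geom_sum

theorem trace_A1 : A1.trace = -(e5 + e5 ^ 4) := by
  rw [A1, Matrix.trace_smul, Matrix.trace_fin_two_of, smul_eq_mul]
  ring

theorem trace_A1_sq : A1.trace ^ 2 = A1.trace + 1 := by
  rw [trace_A1]
  linear_combination (e5 ^ 4 - e5 ^ 3 + 2 * e5 - 1) * e5_geom_sum

theorem trace_B1 : B1.trace = 1 := by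
  rw [B1, Matrix.trace_smul, Matrix.trace_fin_two_of, smul_eq_mul]
  linear_combination -e5_geom_sum

theorem trace_A1_mul_B1 : (A1 * B1).trace = 0 := by
  rw [A1, B1, Matrix.smul_mul, Matrix.mul_smul, Matrix.mul_fin_two, Matrix.trace_smul,
    Matrix.trace_smul, Matrix.trace_fin_two_of, smul_eq_mul, smul_eq_mul]
  linear_combination (3 * e5 ^ 4 - 2 * e5 ^ 3 + 3 * e5 ^ 2) / 5 * e5_geom_sum

theorem A1_pow_five : A1 ^ 5 = -1 :=
  pow_five_eq_neg_one_of_trace_sq_eq det_A1 trace_A1_sq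

theorem B1_pow_three : B1 ^ 3 = -1 :=
  pow_three_eq_neg_one_of_trace_eq_one det_B1 trace_B1

theorem A1_mul_B1_sq : (A1 * B1) ^ 2 = -1 :=
  sq_eq_neg_one_of_trace_eq_zero (by rw [Matrix.det_mul, det_A1, det_B1, one_mul])
    trace_A1_mul_B1

/-- `A₁, B₁ ∈ SL(2,ℂ)`, they satisfy `A₁⁵ = B₁³ = (A₁B₁)² = -I`, and
consequently `r ↦ A₁`, `s ↦ B₁` defines a homomorphism `σ₁` from the binary icosahedral
group `G = ⟨r, s ∣ r⁵ = s³ = (rs)²⟩` into `SL(2,ℂ)`. -/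
theorem sigma1_representation :
    A1.det = 1 ∧ B1.det = 1 ∧
    A1 ^ 5 = -(1 : Matrix (Fin 2) (Fin 2) ℂ) ∧
    B1 ^ 3 = -(1 : Matrix (Fin 2) (Fin 2) ℂ) ∧
    (A1 * B1) ^ 2 = -(1 : Matrix (Fin 2) (Fin 2) ℂ) ∧
    ∃ σ : PresentedGroup icosRels →* Matrix.SpecialLinearGroup (Fin 2) ℂ,
      ((σ (PresentedGroup.of 0) : Matrix.SpecialLinearGroup (Fin 2) ℂ) :
          Matrix (Fin 2) (Fin 2) ℂ) = A1 ∧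
      ((σ (PresentedGroup.of 1) : Matrix.SpecialLinearGroup (Fin 2) ℂ) :
          Matrix (Fin 2) (Fin 2) ℂ) = B1 := by
  refine ⟨det_A1, det_B1, A1_pow_five, B1_pow_three, A1_mul_B1_sq, ?_⟩
  let f : Fin 2 → Matrix.SpecialLinearGroup (Fin 2) ℂ := ![⟨A1, det_A1⟩, ⟨B1, det_B1⟩]
  have hr : f 0 ^ 5 = (f 0 * f 1) ^ 2 := Subtype.ext (A1_pow_five.trans A1_mul_B1_sq.symm)
  have hs : f 1 ^ 3 = (f 0 * f 1) ^ 2 := Subtype.ext (B1_pow_three.trans A1_mul_B1_sq.symm)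
  have hf := lift_eq_one_of_mem_icosRels hr hs
  exact ⟨PresentedGroup.toGroup hf, congrArg Subtype.val (PresentedGroup.toGroup.of hf),
    congrArg Subtype.val (PresentedGroup.toGroup.of hf)⟩

end
end

section
/- The 3×3 complex matrix [[2, 2, 2], [2, −e₅ − e₅⁴, 1], [2, −e₅² − e₅³, 1]] is invertible, i.e., its determinant is nonzero. Consequently the three vectors (2, 2, 2), (2, −e₅ − e₅⁴, 1), (2, −e₅² − e₅³, 1) are linearly independent over ℂ, which shows that the evaluation maps τ₁, τ_r, τ_s are linearly independent on the SL(2,ℂ) character variety of the binary icosahedral group. -/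
noncomputable section

/-!
The determinant is twice the difference of the quadratic Gauss periods `ζ + ζ⁴` and `ζ² + ζ³` of a
primitive fifth root of unity `ζ`. These periods have sum `-1` and product `-1`, so they are the
roots of `X² + X - 1`; its discriminant `5` is nonzero, and hence the periods are distinct.
-/

section CommRing

variable {R : Type*} [CommRing R] {ζ : R}

theorem fifthRoot_periods_add (hζ : (Polynomial.cyclotomic 5 R).IsRoot ζ) :
    (ζ + ζ ^ 4) + (ζ ^ 2 + ζ ^ 3) = -1 := by
  have geom_sum : 1 + ζ + ζ ^ 2 + ζ ^ 3 + ζ ^ 4 = 0 := by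
    have : Fact (Nat.Prime 5) := ⟨Nat.prime_five⟩
    simpa [Polynomial.cyclotomic_prime, Finset.sum_range_succ] using hζ
  linear_combination geom_sum

theorem fifthRoot_periods_mul (hζ : (Polynomial.cyclotomic 5 R).IsRoot ζ) :
    (ζ + ζ ^ 4) * (ζ ^ 2 + ζ ^ 3) = -1 := by
  have periods_add := fifthRoot_periods_add hζ
  have pow_five : ζ ^ 5 = 1 := by linear_combination (ζ - 1) * periods_add
  calc
    (ζ + ζ ^ 4) * (ζ ^ 2 + ζ ^ 3) = ζ ^ 3 + ζ ^ 4 + ζ ^ 5 * ζ + ζ ^ 5 * ζ ^ 2 := by ring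
    _ = (ζ + ζ ^ 4) + (ζ ^ 2 + ζ ^ 3) := by rw [pow_five]; ring
    _ = -1 := periods_add

theorem fifthRoot_periods_sub_sq (hζ : (Polynomial.cyclotomic 5 R).IsRoot ζ) :
    ((ζ + ζ ^ 4) - (ζ ^ 2 + ζ ^ 3)) ^ 2 = 5 :=
  calc
    ((ζ + ζ ^ 4) - (ζ ^ 2 + ζ ^ 3)) ^ 2
        = ((ζ + ζ ^ 4) + (ζ ^ 2 + ζ ^ 3)) ^ 2 - 4 * ((ζ + ζ ^ 4) * (ζ ^ 2 + ζ ^ 3)) := by ring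
    _ = (-1) ^ 2 - 4 * (-1) := by rw [fifthRoot_periods_add hζ, fifthRoot_periods_mul hζ]
    _ = 5 := by norm_num

theorem det_tau_evaluation (a b : R) :
    (!![2, 2, 2; 2, a, 1; 2, b, 1] : Matrix (Fin 3) (Fin 3) R).det = 2 * (b - a) := by
  simp only [Matrix.det_fin_three, Matrix.of_apply, Matrix.cons_val]
  ring

end CommRing

section IsDomain

variable {R : Type*} [CommRing R] [IsDomain R] {ζ : R}

theorem fifthRoot_periods_ne (hζ : IsPrimitiveRoot ζ 5) : ζ + ζ ^ 4 ≠ ζ ^ 2 + ζ ^ 3 := by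
  have five_ne_zero : (5 : R) ≠ 0 := mod_cast hζ.neZero'.out
  have sub_sq := fifthRoot_periods_sub_sq (hζ.isRoot_cyclotomic (by norm_num))
  exact sub_ne_zero.mp (ne_zero_pow two_ne_zero (sub_sq ▸ five_ne_zero))

theorem tau_evaluation_matrix_invertible_general (h2 : (2 : R) ≠ 0)
    (hζ : IsPrimitiveRoot ζ 5) :
    (!![2, 2, 2;
        2, -ζ - ζ ^ 4, 1;
        2, -ζ ^ 2 - ζ ^ 3, 1] : Matrix (Fin 3) (Fin 3) R).det ≠ 0 ∧
    LinearIndependent R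
      ![(![2, 2, 2] : Fin 3 → R),
        ![2, -ζ - ζ ^ 4, 1],
        ![2, -ζ ^ 2 - ζ ^ 3, 1]] := by
  have det_ne_zero : (!![2, 2, 2;
      2, -ζ - ζ ^ 4, 1;
      2, -ζ ^ 2 - ζ ^ 3, 1] : Matrix (Fin 3) (Fin 3) R).det ≠ 0 := by
    rw [det_tau_evaluation]
    refine mul_ne_zero h2 fun h => fifthRoot_periods_ne hζ ?_
    linear_combination h
  exact ⟨det_ne_zero, Matrix.linearIndependent_rows_of_det_ne_zero det_ne_zero⟩

end IsDomain

theorem isPrimitiveRoot_e5 : IsPrimitiveRoot e5 5 :=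
  Complex.isPrimitiveRoot_exp 5 (by norm_num)

/-- The matrix whose rows record the values of the evaluation maps
`τ₁, τ_r, τ_s` on the three characters `χ₀, χ₁, χ₂` of the binary icosahedral group is
invertible (its determinant is nonzero); consequently its three rows are linearly
independent over `ℂ`. -/
theorem tau_evaluation_matrix_invertible :
    (!![2, 2, 2;
        2, -e5 - e5^4, 1;
        2, -e5^2 - e5^3, 1] : Matrix (Fin 3) (Fin 3) ℂ).det ≠ 0 ∧
    LinearIndependent ℂ
      ![(![2, 2, 2] : Fin 3 → ℂ),
        ![2, -e5 - e5^4, 1],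
        ![2, -e5^2 - e5^3, 1]] :=
  tau_evaluation_matrix_invertible_general two_ne_zero isPrimitiveRoot_e5

end
end

section
/- The binary icosahedral group G = ⟨r, s ∣ r⁵ = s³ = (rs)²⟩ is perfect: its abelianization is the trivial group (equivalently, every group homomorphism from G to any commutative group is trivial, and G equals its own commutator subgroup). -/
/-!
In a commutative group, the relations `r ^ p = (r * s) ^ n` and `s ^ q = (r * s) ^ n` are linear,
with matrix `[[p - n, -n], [-n, q - n]]`. By Cramer's rule its determinant `p * q - n * (p + q)`
kills both `r` and `s`, and for `(p, q, n) = (5, 3, 2)` this determinant is `15 - 16 = -1`.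
-/

theorem eq_one_of_zpow_eq_one_of_isUnit {G : Type*} [Group G] {a : G} {m : ℤ}
    (hm : IsUnit m) (ha : a ^ m = 1) : a = 1 := by
  rcases Int.isUnit_iff.mp hm with rfl | rfl <;> simpa using ha

section ZPowRelations

variable {p q n : ℤ}

theorem zpow_eq_one_of_zpow_eq_mul_zpow {A : Type*} [CommGroup A] {a b : A}
    (ha : a ^ p = (a * b) ^ n) (hb : b ^ q = (a * b) ^ n) :
    a ^ (p * q - n * (p + q)) = 1 := by
  rw [zpow_sub, mul_inv_eq_one]
  calc
    a ^ (p * q) = ((a * b) ^ n) ^ q := by rw [zpow_mul, ha]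
    _ = a ^ (n * q) * (b ^ q) ^ n := by
      rw [mul_zpow, mul_zpow, ← zpow_mul, zpow_comm b q n]
    _ = a ^ (n * q) * (a ^ p) ^ n := by rw [hb, ha]
    _ = a ^ (n * (p + q)) := by rw [← zpow_mul, ← zpow_add]; ring_nf

variable {G : Type*} [Group G] {r s : G}

theorem monoidHom_eq_one_of_zpow_eq_mul_zpow {A : Type*} [CommGroup A]
    (hgen : Subgroup.closure {r, s} = ⊤) (hr : r ^ p = (r * s) ^ n) (hs : s ^ q = (r * s) ^ n)
    (hunit : IsUnit (p * q - n * (p + q))) (f : G →* A) : f = 1 := by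
  have hfr : f r ^ p = (f r * f s) ^ n := by simpa using congrArg f hr
  have hfs : f s ^ q = (f r * f s) ^ n := by simpa using congrArg f hs
  have hr_one : f r = 1 :=
    eq_one_of_zpow_eq_one_of_isUnit hunit (zpow_eq_one_of_zpow_eq_mul_zpow hfr hfs)
  have hs_one : f s = 1 := by
    rw [mul_comm (f r)] at hfr hfs
    rw [mul_comm p, add_comm p] at hunit
    exact eq_one_of_zpow_eq_one_of_isUnit hunit (zpow_eq_one_of_zpow_eq_mul_zpow hfs hfr)
  refine MonoidHom.eq_of_eqOn_dense hgen ?_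
  rintro x (rfl | rfl) <;> assumption

theorem binaryIcosahedral_perfect_general
    (hgen : Subgroup.closure {r, s} = ⊤) (hr : r ^ p = (r * s) ^ n) (hs : s ^ q = (r * s) ^ n)
    (hunit : IsUnit (p * q - n * (p + q))) :
    Subsingleton (Abelianization G) ∧
    (∀ (H : Type*) [CommGroup H] (f : G →* H) (g : G), f g = 1) ∧
    commutator G = ⊤ := by
  have hcomm : commutator G = ⊤ := by
    rw [← Abelianization.ker_of, MonoidHom.ker_eq_top_iff]
    exact monoidHom_eq_one_of_zpow_eq_mul_zpow hgen hr hs hunit _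
  refine ⟨QuotientGroup.subsingleton_iff.mpr hcomm, fun H _ f g => ?_, hcomm⟩
  rw [monoidHom_eq_one_of_zpow_eq_mul_zpow hgen hr hs hunit f, MonoidHom.one_apply]

end ZPowRelations

namespace icosRels

open PresentedGroup

theorem closure_generators_eq_top :
    Subgroup.closure {of 0, of 1} = (⊤ : Subgroup (PresentedGroup icosRels)) := by
  rw [← closure_range_of icosRels]
  congr 1
  ext x
  simp [Fin.exists_fin_two, eq_comm]

theorem of_zero_pow_five : (of 0 : PresentedGroup icosRels) ^ 5 = (of 0 * of 1) ^ 2 :=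
  mk_eq_mk_of_mul_inv_mem (.inl rfl)

theorem of_one_pow_three : (of 1 : PresentedGroup icosRels) ^ 3 = (of 0 * of 1) ^ 2 :=
  mk_eq_mk_of_mul_inv_mem (.inr rfl)

end icosRels

/-- The binary icosahedral group `G = ⟨r, s ∣ r⁵ = s³ = (rs)²⟩` is
perfect: its abelianization is trivial; equivalently, every homomorphism from `G` to a
commutative group is trivial, and `G` equals its own commutator subgroup. -/
theorem binaryIcosahedral_perfect :
    Subsingleton (Abelianization (PresentedGroup icosRels)) ∧
    (∀ (H : Type) [CommGroup H] (f : PresentedGroup icosRels →* H)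
        (g : PresentedGroup icosRels), f g = 1) ∧
    commutator (PresentedGroup icosRels) = ⊤ :=
  binaryIcosahedral_perfect_general (p := 5) (q := 3) (n := 2) icosRels.closure_generators_eq_top
    (mod_cast icosRels.of_zero_pow_five) (mod_cast icosRels.of_one_pow_three) (by decide)
end

section
/- Every reducible SL(2,ℂ)-representation of the binary icosahedral group is trivial: if ρ : G → SL(2,ℂ) is a group homomorphism and there exists a nonzero vector v ∈ ℂ² such that for every g ∈ G the vector v is an eigenvector of ρ(g) (i.e., for every g there exists λ ∈ ℂ with ρ(g)·v = λ·v), then ρ(g) is the identity matrix for all g ∈ G. In particular, every reducible SL(2,ℂ)-representation of G is equivalent to the trivial 2-dimensional representation σ₀. -/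
/-!
Since `G` is perfect, every homomorphism from `G` with pairwise commuting values is trivial. This
applies three times: to the determinant; to the eigenvalue character of the common eigenvector `v`,
so that `v` is fixed; and to `ρ` itself, because if `M` has determinant one and fixes `v ≠ 0` in the
plane, then `M - 1` kills `v` and takes values parallel to `v`, so two such `M - 1` multiply to
zero and two such `M` commute.
-/

open Matrix
open scoped commutatorElement

section PerfectGroup

variable {G : Type*} [Group G] [Group.IsPerfect G]

theorem eq_one_of_forall_commute_apply {N : Type*} [Monoid N] (f : G →* N)
    (hf : ∀ g h, Commute (f g) (f h)) : f = 1 := by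
  have commutator_le_ker : commutator G ≤ f.ker := by
    rw [commutator_def, Subgroup.commutator_le]
    intro g _ h _
    calc f ⁅g, h⁆ = f g * f h * f (g⁻¹ * h⁻¹) := by
          simp only [commutatorElement_def, map_mul, mul_assoc]
      _ = f h * f g * f (g⁻¹ * h⁻¹) := by rw [(hf g h).eq]
      _ = f (h * g * (g⁻¹ * h⁻¹)) := by simp only [map_mul]
      _ = 1 := by rw [← _root_.mul_inv_rev, mul_inv_cancel, map_one]
  ext g
  exact commutator_le_ker Group.IsPerfect.mem_commutator

theorem apply_eq_self_of_forall_exists_apply_eq_smul {R V : Type*} [CommRing R] [IsDomain R]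
    [AddCommGroup V] [Module R V] [Module.IsTorsionFree R V] (ρ : Representation R G V) {v : V}
    (hv : v ≠ 0) (heig : ∀ g, ∃ l : R, ρ g v = l • v) (g : G) : ρ g v = v := by
  have smul_v_injective := smul_left_injective R hv
  choose l hl using heig
  let χ : G →* R :=
    { toFun := l
      map_one' := smul_v_injective (by simp [← hl])
      map_mul' := fun g h => smul_v_injective <| by
        simp only [← hl, map_mul, Module.End.mul_apply]
        rw [hl h, map_smul, hl g, smul_smul, mul_comm] }
  have hχ : χ = 1 := eq_one_of_forall_commute_apply χ fun _ _ => Commute.all _ _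
  calc ρ g v = χ g • v := hl g
    _ = v := by rw [hχ, MonoidHom.one_apply, one_smul]

end PerfectGroup

section FixedVector

variable {R : Type*} [CommRing R]

-- Cross-multiplied form of: every column of `A` is a multiple of `v`.
theorem mul_apply_comm_of_trace_eq_zero_of_mulVec_eq_zero {A : Matrix (Fin 2) (Fin 2) R}
    {v : Fin 2 → R} (htr : A.trace = 0) (hA : A *ᵥ v = 0) (i j k : Fin 2) :
    v k * A i j = v i * A k j := by
  have row_zero := congrFun hA 0
  have row_one := congrFun hA 1
  simp only [mulVec, dotProduct, Fin.sum_univ_two, Pi.zero_apply] at row_zero row_one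
  rw [trace_fin_two] at htr
  fin_cases i <;> fin_cases j <;> fin_cases k <;> simp only [Fin.zero_eta, Fin.mk_one] <;> grind

theorem mul_eq_zero_of_mulVec_eq_zero_of_mul_apply_comm [NoZeroDivisors R] {l m n : Type*}
    [Fintype m] {A : Matrix l m R} {B : Matrix m n R} {v : m → R} (hv : v ≠ 0)
    (hA : A *ᵥ v = 0) (hB : ∀ i j k, v k * B i j = v i * B k j) : A * B = 0 := by
  obtain ⟨k, hk⟩ := Function.ne_iff.mp hv
  ext i j
  refine (mul_eq_zero.mp ?_).resolve_left hk
  calc v k * (A * B) i j = ∑ x, A i x * (v k * B x j) := by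
        simp only [mul_apply, Finset.mul_sum, mul_left_comm]
    _ = ∑ x, A i x * v x * B k j := by simp only [hB _ j k, mul_assoc]
    _ = (A *ᵥ v) i * B k j := by simp only [mulVec, dotProduct, Finset.sum_mul]
    _ = 0 := by rw [hA, Pi.zero_apply, zero_mul]

variable [IsDomain R]

theorem trace_sub_one_eq_zero_of_mulVec_eq_self {M : Matrix (Fin 2) (Fin 2) R} {v : Fin 2 → R}
    (hv : v ≠ 0) (hdet : M.det = 1) (hM : M *ᵥ v = v) : (M - 1).trace = 0 := by
  have det_sub_one : (M - 1).det = 0 :=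
    exists_mulVec_eq_zero_iff.mp ⟨v, hv, by rw [sub_mulVec, hM, one_mulVec, sub_self]⟩
  have det_eq : M.det = 1 + (M - 1).trace + (M - 1).det := by
    simp only [det_fin_two, trace_fin_two, Matrix.sub_apply, one_apply_eq,
      one_apply_ne zero_ne_one, one_apply_ne one_ne_zero]
    ring
  linear_combination hdet - det_eq - det_sub_one

theorem commute_of_mulVec_eq_self {M N : Matrix (Fin 2) (Fin 2) R} {v : Fin 2 → R} (hv : v ≠ 0)
    (hMdet : M.det = 1) (hNdet : N.det = 1) (hM : M *ᵥ v = v) (hN : N *ᵥ v = v) :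
    Commute M N := by
  have sub_one_mul_sub_one {A B : Matrix (Fin 2) (Fin 2) R} (hBdet : B.det = 1)
      (hA : A *ᵥ v = v) (hB : B *ᵥ v = v) : (A - 1) * (B - 1) = 0 :=
    mul_eq_zero_of_mulVec_eq_zero_of_mul_apply_comm hv
      (by rw [sub_mulVec, hA, one_mulVec, sub_self])
      (mul_apply_comm_of_trace_eq_zero_of_mulVec_eq_zero
        (trace_sub_one_eq_zero_of_mulVec_eq_self hv hBdet hB)
        (by rw [sub_mulVec, hB, one_mulVec, sub_self]))
  have hMN : Commute (M - 1) (N - 1) :=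
    (sub_one_mul_sub_one hNdet hM hN).trans (sub_one_mul_sub_one hMdet hN hM).symm
  simpa only [sub_add_cancel] using
    (hMN.add_left (Commute.one_left _)).add_right (Commute.one_right _)

end FixedVector

section BinaryIcosahedral

theorem binaryIcosahedral_r_pow_five :
    (.of 0 : PresentedGroup icosRels) ^ 5 = (.of 0 * .of 1) ^ 2 :=
  PresentedGroup.mk_eq_mk_of_mul_inv_mem (rels := icosRels) (Or.inl rfl)

theorem binaryIcosahedral_s_pow_three :
    (.of 1 : PresentedGroup icosRels) ^ 3 = (.of 0 * .of 1) ^ 2 :=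
  PresentedGroup.mk_eq_mk_of_mul_inv_mem (rels := icosRels) (Or.inr rfl)

theorem eq_one_and_eq_one_of_pow_five_of_pow_three {A : Type*} [CommGroup A] {r s : A}
    (hr : r ^ 5 = (r * s) ^ 2) (hs : s ^ 3 = (r * s) ^ 2) : r = 1 ∧ s = 1 := by
  rw [mul_pow] at hr hs
  have s_eq : s = r ^ 2 := mul_right_cancel (b := s ^ 2) (by rw [← hs, ← pow_succ'])
  have r_eq : r = 1 := by
    rw [s_eq, ← pow_mul, ← pow_add] at hr
    exact mul_left_cancel (a := r ^ 5) (by rw [← pow_succ, mul_one, hr])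
  exact ⟨r_eq, by rw [s_eq, r_eq, one_pow]⟩

instance isPerfect_binaryIcosahedral : Group.IsPerfect (PresentedGroup icosRels) := by
  let π : PresentedGroup icosRels →* Abelianization (PresentedGroup icosRels) := Abelianization.of
  obtain ⟨hr, hs⟩ := eq_one_and_eq_one_of_pow_five_of_pow_three
    (r := π (.of 0)) (s := π (.of 1))
    (by simpa only [map_pow, map_mul] using congrArg π binaryIcosahedral_r_pow_five)
    (by simpa only [map_pow, map_mul] using congrArg π binaryIcosahedral_s_pow_three)
  have hπ : π = 1 := PresentedGroup.ext (rels := icosRels) (Fin.forall_fin_two.mpr ⟨hr, hs⟩)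
  rw [Group.isPerfect_def, ← Abelianization.ker_of, show Abelianization.of = 1 from hπ,
    MonoidHom.ker_one]

end BinaryIcosahedral

theorem binaryIcosahedral_reducible_rep_trivial_general {G R : Type*} [Group G]
    [Group.IsPerfect G] [CommRing R] [IsDomain R] (ρ : G →* Matrix (Fin 2) (Fin 2) R)
    {v : Fin 2 → R} (hv : v ≠ 0) (heig : ∀ g, ∃ l : R, ρ g *ᵥ v = l • v) : ρ = 1 := by
  have hdet (g : G) : (ρ g).det = 1 :=
    DFunLike.congr_fun (eq_one_of_forall_commute_apply (detMonoidHom.comp ρ)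
      fun _ _ => Commute.all _ _) g
  have hfix (g : G) : ρ g *ᵥ v = v :=
    apply_eq_self_of_forall_exists_apply_eq_smul
      ((toLinAlgEquiv' : Matrix (Fin 2) (Fin 2) R ≃ₐ[R] _).toMonoidHom.comp ρ) hv heig g
  exact eq_one_of_forall_commute_apply ρ fun g h =>
    commute_of_mulVec_eq_self hv (hdet g) (hdet h) (hfix g) (hfix h)

/-- Every reducible `SL(2,ℂ)`-representation of the binary icosahedral
group `G = ⟨r, s ∣ r⁵ = s³ = (rs)²⟩` is trivial: if `ρ : G → SL(2,ℂ)` is a homomorphism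
and some nonzero `v ∈ ℂ²` is an eigenvector of every `ρ(g)`, then `ρ(g)` is the identity
matrix for all `g`; in particular `ρ` is equivalent to the trivial `2`-dimensional
representation `σ₀`. -/
theorem binaryIcosahedral_reducible_rep_trivial
    (ρ : PresentedGroup icosRels →* Matrix.SpecialLinearGroup (Fin 2) ℂ)
    (v : Fin 2 → ℂ) (hv : v ≠ 0)
    (heig : ∀ g : PresentedGroup icosRels,
      ∃ l : ℂ, ((ρ g : Matrix.SpecialLinearGroup (Fin 2) ℂ) :
        Matrix (Fin 2) (Fin 2) ℂ).mulVec v = l • v) :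
    ∀ g : PresentedGroup icosRels,
      ((ρ g : Matrix.SpecialLinearGroup (Fin 2) ℂ) : Matrix (Fin 2) (Fin 2) ℂ) = 1 := by
  exact DFunLike.congr_fun (binaryIcosahedral_reducible_rep_trivial_general
    (SpecialLinearGroup.coeMonoidHom.comp ρ) hv heig)
end

section
/- The binary icosahedral group is finite of order 120: the group G with presentation ⟨r, s ∣ r⁵ = s³ = (rs)²⟩ satisfies |G| = 120. -/
/-!
Up to the central element `r ^ 5`, which will turn out to have order two, view `r` as a fifth-turn
of the icosahedron about a vertex axis. The stabilizer `B` of that axis is generated by `r` and a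
half-turn inverting `r`, so it has at most `10 * 2` elements. The powers of `r` permute the other
five vertex axes cyclically, which suggests the decomposition `G = B ∪ B s ⟨r⟩` and the bound
`20 * (1 + 5)`. The decomposition follows by rewriting each `s r ^ k s`, starting from the
equivalent relations `r s r = s ^ 2` and `s r s = r ^ 4`. The resulting 120 normal
forms remain distinct in `SL(2, 𝔽₅)`, where `B` becomes a Borel subgroup and the decomposition
that of Bruhat.
-/

open DoubleCoset Matrix Subgroup
open scoped MatrixGroups

/-- Two elements of a group satisfying the relations of the binary icosahedral group, that is, the
image of its generators under a homomorphism. -/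
structure IsIcosahedralPair {G : Type*} [Group G] (r s : G) : Prop where
  r_pow_five : r ^ 5 = (r * s) ^ 2
  s_pow_three : s ^ 3 = (r * s) ^ 2

section AxisCells

variable {G : Type*} [Group G]

/-- A half-turn about an axis perpendicular to that of `r`. It is a conjugate of the half-turn
`r * s`, and it inverts `r` when `r` and `s` form an icosahedral pair. -/
def axisFlip (r s : G) : G :=
  (s * r ^ 2) * (r * s) * (s * r ^ 2)⁻¹

/-- The stabilizer of the unoriented axis of `r`, given by generators: the rotations `r ^ k` about
the axis, and a half-turn reversing it. -/
def axisStabilizer (r s : G) : Subgroup G :=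
  zpowers r ⊔ zpowers (axisFlip r s)

/-- The part of the group that sends the axis of `r` to itself or to one of the five axes in the
`r`-orbit of its image under `s`, i.e. two double cosets of `axisStabilizer r s` and `zpowers r`. -/
def axisCells (r s : G) : Set G :=
  axisStabilizer r s ∪ doubleCoset s (axisStabilizer r s) (zpowers r)

/-- The normal form of the elements of a group generated by an icosahedral pair: the value `none`
indexes the stabilizer of the axis of `r`, and `some k` its translate by `s * r ^ k`. -/
def axisWord (r s : G) : Fin 10 × Fin 2 × Option (Fin 5) → G
  | (i, j, none) => r ^ (i : ℕ) * axisFlip r s ^ (j : ℕ)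
  | (i, j, some k) => r ^ (i : ℕ) * axisFlip r s ^ (j : ℕ) * s * r ^ (k : ℕ)

theorem map_axisWord {H : Type*} [Group H] (f : G →* H) (r s : G)
    (x : Fin 10 × Fin 2 × Option (Fin 5)) :
    f (axisWord r s x) = axisWord (f r) (f s) x := by
  obtain ⟨i, j, _ | k⟩ := x <;> simp [axisWord, axisFlip]

variable {r s : G}

theorem s_mul_r_pow_three_mul_s (r s : G) : s * r ^ 3 * s = axisFlip r s * s * r ^ 2 := by
  simp only [axisFlip]
  group

theorem r_mem_axisStabilizer (r s : G) : r ∈ axisStabilizer r s :=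
  mem_sup_left (mem_zpowers r)

theorem axisFlip_mem_axisStabilizer (r s : G) : axisFlip r s ∈ axisStabilizer r s :=
  mem_sup_right (mem_zpowers (axisFlip r s))

theorem mul_s_mul_mem_axisCells {b u : G} (hb : b ∈ axisStabilizer r s) (hu : u ∈ zpowers r) :
    b * s * u ∈ axisCells r s :=
  Or.inr (mem_doubleCoset.mpr ⟨b, hb, u, hu, rfl⟩)

theorem mul_mem_axisCells {b g : G} (hb : b ∈ axisStabilizer r s) (hg : g ∈ axisCells r s) :
    b * g ∈ axisCells r s := by
  rcases hg with hg | hg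
  · exact Or.inl (mul_mem hb hg)
  · obtain ⟨c, hc, u, hu, rfl⟩ := mem_doubleCoset.mp hg
    simpa only [mul_assoc] using mul_s_mul_mem_axisCells (mul_mem hb hc) hu

theorem mul_r_mem_axisCells {g : G} (hg : g ∈ axisCells r s) : g * r ∈ axisCells r s := by
  rcases hg with hg | hg
  · exact Or.inl (mul_mem hg (r_mem_axisStabilizer r s))
  · obtain ⟨c, hc, u, hu, rfl⟩ := mem_doubleCoset.mp hg
    rw [mul_assoc]
    exact mul_s_mul_mem_axisCells hc (mul_mem hu (mem_zpowers r))

end AxisCells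

namespace IsIcosahedralPair

variable {G : Type*} [Group G] {r s : G}

theorem r_mul_s_mul_r (h : IsIcosahedralPair r s) : r * s * r = s ^ 2 := by
  apply mul_right_cancel (b := s)
  calc r * s * r * s = (r * s) ^ 2 := by simp only [pow_two, mul_assoc]
    _ = s ^ 3 := h.s_pow_three.symm
    _ = s ^ 2 * s := pow_succ s 2

theorem s_mul_r_mul_s (h : IsIcosahedralPair r s) : s * r * s = r ^ 4 := by
  apply mul_left_cancel (a := r)
  calc r * (s * r * s) = (r * s) ^ 2 := by simp only [pow_two, mul_assoc]
    _ = r ^ 5 := h.r_pow_five.symm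
    _ = r * r ^ 4 := pow_succ' r 4

theorem s_pow_three_eq_r_pow_five (h : IsIcosahedralPair r s) : s ^ 3 = r ^ 5 :=
  h.s_pow_three.trans h.r_pow_five.symm

theorem commute_pow_five (h : IsIcosahedralPair r s) : Commute (r ^ 5) s := by
  rw [← h.s_pow_three_eq_r_pow_five]
  exact Commute.pow_self s 3

theorem s_mul_r_sq_mul_s (h : IsIcosahedralPair r s) : s * r ^ 2 * s = r ^ 4 * s * r⁻¹ := by
  rw [eq_mul_inv_iff_mul_eq]
  apply mul_left_cancel (a := r)
  calc r * (s * r ^ 2 * s * r) = (r * s * r) * (r * s * r) := by simp only [pow_two, mul_assoc]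
    _ = s ^ 3 * s := by rw [h.r_mul_s_mul_r]; group
    _ = r * (r ^ 4 * s) := by rw [h.s_pow_three_eq_r_pow_five]; group

theorem s_mul_r_pow_four_mul_s (h : IsIcosahedralPair r s) :
    s * r ^ 4 * s = r * (s * r ^ 3 * s) * r := by
  calc s * r ^ 4 * s = s ^ 2 * r * s ^ 2 := by
        simp only [← h.s_mul_r_mul_s, pow_two, mul_assoc]
    _ = r * (s * r ^ 3 * s) * r := by
        simp only [← h.r_mul_s_mul_r, pow_three, mul_assoc]

theorem axisFlip_sq (h : IsIcosahedralPair r s) : axisFlip r s ^ 2 = r ^ 5 := by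
  have hcomm : Commute (s * r ^ 2) (r ^ 5) :=
    (h.commute_pow_five.symm).mul_left ((Commute.refl r).pow_pow 2 5)
  rw [axisFlip, conj_pow, ← h.r_pow_five, hcomm.eq, mul_inv_cancel_right]

theorem conj_r_inv_pow_three (h : IsIcosahedralPair r s) :
    s * (r ^ 3)⁻¹ * s⁻¹ = r⁻¹ * s * r⁻¹ * (s ^ 2)⁻¹ := by
  calc s * (r ^ 3)⁻¹ * s⁻¹ = (r ^ 5)⁻¹ * (r ^ 5 * s) * (r ^ 3)⁻¹ * s⁻¹ := by group
    _ = (r ^ 5)⁻¹ * (s * r ^ 2 * s) * (s ^ 2)⁻¹ := by rw [h.commute_pow_five.eq]; group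
    _ = r⁻¹ * s * r⁻¹ * (s ^ 2)⁻¹ := by rw [h.s_mul_r_sq_mul_s]; group

theorem r_mul_axisFlip_mul_r (h : IsIcosahedralPair r s) :
    r * axisFlip r s * r = axisFlip r s := by
  have hw : axisFlip r s = s * r ^ 3 * s * (r ^ 2)⁻¹ * s⁻¹ := by
    rw [s_mul_r_pow_three_mul_s]
    group
  calc r * axisFlip r s * r
      = (r * (s * r ^ 3 * s) * r) * (r ^ 3)⁻¹ * s⁻¹ * r := by rw [hw]; group
    _ = s * r ^ 4 * (s * (r ^ 3)⁻¹ * s⁻¹) * r := by rw [← h.s_mul_r_pow_four_mul_s]; group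
    _ = s * r ^ 3 * s * r⁻¹ * (s ^ 2)⁻¹ * r := by rw [h.conj_r_inv_pow_three]; group
    _ = axisFlip r s := by rw [hw, ← h.r_mul_s_mul_r]; group

theorem semiconjBy_axisFlip (h : IsIcosahedralPair r s) : SemiconjBy (axisFlip r s) r r⁻¹ := by
  rw [SemiconjBy, eq_inv_mul_iff_mul_eq, ← mul_assoc, h.r_mul_axisFlip_mul_r]

theorem r_pow_ten (h : IsIcosahedralPair r s) : r ^ 10 = 1 := by
  have hinv : r ^ 5 = (r ^ 5)⁻¹ := by
    apply mul_left_cancel (a := axisFlip r s)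
    calc axisFlip r s * r ^ 5 = axisFlip r s ^ 2 * axisFlip r s := by
          rw [← h.axisFlip_sq]; group
      _ = r ^ 5 * axisFlip r s := by rw [h.axisFlip_sq]
      _ = axisFlip r s * (r ^ 5)⁻¹ := by
          rw [← inv_pow, (h.semiconjBy_axisFlip.inv_right.pow_right 5).eq, inv_inv]
  calc r ^ 10 = r ^ 5 * r ^ 5 := pow_add r 5 5
    _ = 1 := mul_eq_one_iff_eq_inv.mpr hinv

theorem s_pow_six (h : IsIcosahedralPair r s) : s ^ 6 = 1 := by
  rw [pow_mul s 3 2, h.s_pow_three_eq_r_pow_five, ← pow_mul, h.r_pow_ten]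

theorem isOfFinOrder_r (h : IsIcosahedralPair r s) : IsOfFinOrder r :=
  isOfFinOrder_iff_pow_eq_one.mpr ⟨10, by norm_num, h.r_pow_ten⟩

theorem isOfFinOrder_s (h : IsIcosahedralPair r s) : IsOfFinOrder s :=
  isOfFinOrder_iff_pow_eq_one.mpr ⟨6, by norm_num, h.s_pow_six⟩

theorem isOfFinOrder_axisFlip (h : IsIcosahedralPair r s) : IsOfFinOrder (axisFlip r s) := by
  refine isOfFinOrder_iff_pow_eq_one.mpr ⟨4, by norm_num, ?_⟩
  rw [pow_mul _ 2 2, h.axisFlip_sq, ← pow_mul, h.r_pow_ten]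

theorem axisFlip_mem_normalizer (h : IsIcosahedralPair r s) :
    axisFlip r s ∈ normalizer (zpowers r) := by
  rw [mem_normalizer_iff_map_conj_eq, MonoidHom.map_zpowers, MonoidHom.coe_coe, MulAut.conj_apply,
    h.semiconjBy_axisFlip.eq, mul_inv_cancel_right, zpowers_inv]

theorem s_mul_r_pow_mul_s_mem_axisCells (h : IsIcosahedralPair r s) (k : Fin 5) :
    s * r ^ (k : ℕ) * s ∈ axisCells r s := by
  have hr := r_mem_axisStabilizer r s
  have hw := axisFlip_mem_axisStabilizer r s
  have hu := mem_zpowers r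
  fin_cases k
  · have : s * r ^ 0 * s = r * s * r := by rw [pow_zero, mul_one, h.r_mul_s_mul_r, pow_two]
    exact this ▸ mul_s_mul_mem_axisCells hr hu
  · have : s * r ^ 1 * s = r ^ 4 := by rw [pow_one, h.s_mul_r_mul_s]
    exact this ▸ Or.inl (pow_mem hr 4)
  · exact h.s_mul_r_sq_mul_s ▸ mul_s_mul_mem_axisCells (pow_mem hr 4) (inv_mem hu)
  · exact s_mul_r_pow_three_mul_s r s ▸ mul_s_mul_mem_axisCells hw (pow_mem hu 2)
  · have : s * r ^ 4 * s = r * axisFlip r s * s * r ^ 3 := by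
      rw [h.s_mul_r_pow_four_mul_s, s_mul_r_pow_three_mul_s]
      group
    exact this ▸ mul_s_mul_mem_axisCells (mul_mem hr hw) (pow_mem hu 3)

theorem exists_fin_of_mem_axisStabilizer (h : IsIcosahedralPair r s) {b : G}
    (hb : b ∈ axisStabilizer r s) :
    ∃ (i : Fin 10) (j : Fin 2), r ^ (i : ℕ) * axisFlip r s ^ (j : ℕ) = b := by
  have hnorm : zpowers (axisFlip r s) ≤ normalizer (zpowers r) :=
    zpowers_le.mpr h.axisFlip_mem_normalizer
  rw [axisStabilizer, ← SetLike.mem_coe, coe_mul_of_right_le_normalizer_left _ _ hnorm] at hb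
  obtain ⟨_, hx, _, hy, rfl⟩ := hb
  obtain ⟨m, rfl⟩ := h.isOfFinOrder_r.mem_powers_iff_mem_zpowers.mpr hx
  obtain ⟨n, rfl⟩ := h.isOfFinOrder_axisFlip.mem_powers_iff_mem_zpowers.mpr hy
  refine ⟨Fin.ofNat 10 (m + 5 * (n / 2)), Fin.ofNat 2 n, ?_⟩
  calc r ^ ((m + 5 * (n / 2)) % 10) * axisFlip r s ^ (n % 2)
      = r ^ m * (axisFlip r s ^ (2 * (n / 2)) * axisFlip r s ^ (n % 2)) := by
        rw [← pow_eq_pow_mod _ h.r_pow_ten, pow_add, pow_mul r, pow_mul (axisFlip r s),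
          h.axisFlip_sq, mul_assoc]
    _ = r ^ m * axisFlip r s ^ n := by rw [← pow_add, Nat.div_add_mod]

theorem exists_fin_of_mem_doubleCoset (h : IsIcosahedralPair r s) {g : G}
    (hg : g ∈ doubleCoset s (axisStabilizer r s) (zpowers r)) :
    ∃ b ∈ axisStabilizer r s, ∃ k : Fin 5, b * s * r ^ (k : ℕ) = g := by
  obtain ⟨b, hb, _, hx, rfl⟩ := mem_doubleCoset.mp hg
  obtain ⟨n, rfl⟩ := h.isOfFinOrder_r.mem_powers_iff_mem_zpowers.mpr hx
  have hcomm : Commute ((r ^ 5) ^ (n / 5)) s := h.commute_pow_five.pow_left _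
  refine ⟨b * (r ^ 5) ^ (n / 5), mul_mem hb (pow_mem (pow_mem (r_mem_axisStabilizer r s) 5) _),
    Fin.ofNat 5 n, ?_⟩
  calc b * (r ^ 5) ^ (n / 5) * s * r ^ (n % 5)
      = b * s * ((r ^ 5) ^ (n / 5) * r ^ (n % 5)) := by
        rw [mul_assoc b, hcomm.eq]; simp only [mul_assoc]
    _ = b * s * r ^ n := by rw [← pow_mul, ← pow_add, Nat.div_add_mod]

theorem mul_s_mem_axisCells (h : IsIcosahedralPair r s) {g : G} (hg : g ∈ axisCells r s) :
    g * s ∈ axisCells r s := by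
  rcases hg with hg | hg
  · simpa only [mul_one] using mul_s_mul_mem_axisCells hg (one_mem (zpowers r))
  · obtain ⟨b, hb, k, rfl⟩ := h.exists_fin_of_mem_doubleCoset hg
    simpa only [mul_assoc] using mul_mem_axisCells hb (h.s_mul_r_pow_mul_s_mem_axisCells k)

theorem axisCells_eq_univ (h : IsIcosahedralPair r s) (hgen : closure {r, s} = ⊤) :
    axisCells r s = Set.univ := by
  have hfin : ∀ x ∈ ({r, s} : Set G), IsOfFinOrder x := by
    rintro x (rfl | rfl)
    exacts [h.isOfFinOrder_r, h.isOfFinOrder_s]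
  have hmon : Submonoid.closure {r, s} = ⊤ := by
    rw [← closure_toSubmonoid_of_isOfFinOrder hfin, hgen, top_toSubmonoid]
  refine Set.eq_univ_of_forall fun g ↦ ?_
  induction g using Submonoid.induction_of_closure_eq_top_right hmon with
  | one => exact Or.inl (one_mem _)
  | mul_right x y hy hx =>
    rcases hy with rfl | rfl
    exacts [mul_r_mem_axisCells hx, h.mul_s_mem_axisCells hx]

theorem axisWord_surjective (h : IsIcosahedralPair r s) (hgen : closure {r, s} = ⊤) :
    Function.Surjective (axisWord r s) := by
  intro g
  have hg : g ∈ axisCells r s := h.axisCells_eq_univ hgen ▸ Set.mem_univ g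
  rcases hg with hg | hg
  · obtain ⟨i, j, hij⟩ := h.exists_fin_of_mem_axisStabilizer hg
    exact ⟨(i, j, none), hij⟩
  · obtain ⟨b, hb, k, rfl⟩ := h.exists_fin_of_mem_doubleCoset hg
    obtain ⟨i, j, rfl⟩ := h.exists_fin_of_mem_axisStabilizer hb
    exact ⟨(i, j, some k), rfl⟩

theorem freeGroupLift_eq_one (h : IsIcosahedralPair r s) :
    ∀ x ∈ icosRels, FreeGroup.lift ![r, s] x = 1 := by
  rintro x (rfl | rfl)
  · simpa [mul_inv_eq_one] using h.r_pow_five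
  · simpa [mul_inv_eq_one] using h.s_pow_three

end IsIcosahedralPair

/-- The image of `r` in `SL(2, 𝔽₅)`: minus a unipotent element, so that `r ^ 5 = -1`. -/
def slRotation : SL(2, ZMod 5) :=
  ⟨!![-1, -1; 0, -1], by decide⟩

/-- The image of `s` in `SL(2, 𝔽₅)`: an element of trace `1`, so that `s ^ 3 = -1`. The product
`slRotation * slTurn` has trace `0`, hence square `-1`. -/
def slTurn : SL(2, ZMod 5) :=
  ⟨!![1, 1; -1, 0], by decide⟩

theorem isIcosahedralPair_sl : IsIcosahedralPair slRotation slTurn :=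
  ⟨by decide, by decide⟩

theorem axisWord_sl_injective : Function.Injective (axisWord slRotation slTurn) := by
  decide +kernel

theorem isIcosahedralPair_presentedGroup :
    IsIcosahedralPair (PresentedGroup.of 0 : PresentedGroup icosRels) (PresentedGroup.of 1) where
  r_pow_five := mul_inv_eq_one.mp (PresentedGroup.one_of_mem (rels := icosRels) (Or.inl rfl))
  s_pow_three := mul_inv_eq_one.mp (PresentedGroup.one_of_mem (rels := icosRels) (Or.inr rfl))

theorem closure_presentedGroup_generators :
    closure {(PresentedGroup.of 0 : PresentedGroup icosRels), PresentedGroup.of 1} = ⊤ := by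
  rw [← PresentedGroup.closure_range_of icosRels]
  congr 1
  ext x
  simp [Fin.exists_fin_two, eq_comm]

/-- The binary icosahedral group
`G = ⟨r, s ∣ r⁵ = s³ = (rs)²⟩` is finite of order `120`. -/
theorem binaryIcosahedral_card :
    Nat.card (PresentedGroup icosRels) = 120 := by
  let r : PresentedGroup icosRels := PresentedGroup.of 0
  let s : PresentedGroup icosRels := PresentedGroup.of 1
  let φ : PresentedGroup icosRels →* SL(2, ZMod 5) :=
    PresentedGroup.toGroup isIcosahedralPair_sl.freeGroupLift_eq_one
  have hsurj : Function.Surjective (axisWord r s) :=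
    isIcosahedralPair_presentedGroup.axisWord_surjective closure_presentedGroup_generators
  have hφr : φ r = slRotation := PresentedGroup.toGroup.of _
  have hφs : φ s = slTurn := PresentedGroup.toGroup.of _
  have hφ : φ ∘ axisWord r s = axisWord slRotation slTurn :=
    funext fun x ↦ by rw [Function.comp_apply, map_axisWord, hφr, hφs]
  have hinj : Function.Injective (axisWord r s) :=
    .of_comp (hφ ▸ axisWord_sl_injective)
  rw [← Nat.card_eq_of_bijective _ ⟨hinj, hsurj⟩]
  simp
end
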